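/- Let k, l ≥ 1 be integers with k ≤ |α| if α ∈ ℤ and l ≤ |β| if β ∈ ℤ. Then Ker (L_{α,β;ε} − Id)^k ∩ Ker (L_{α,β;ε} + Id)^l = {0}, and the kernel of the composite operator (L_{α,β;ε} − Id)^k ∘ (L_{α,β;ε} + Id)^l on functions ℤ → ℂ equals the direct sum Ker (L_{α,β;ε} − Id)^k ⊕ Ker (L_{α,β;ε} + Id)^l, i.e. the 2(k+l)-dimensional span of the functions φ₊^{(0)},…,φ₊^{(k−1)}, ψ₊^{(0)},…,ψ₊^{(k−1)}, φ₋^{(0)},…,φ₋^{(l−1)}, ψ₋^{(0)},…,ψ₋^{(l−1)}. -/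

import Mathlib

/-- Pochhammer symbol `(a)_n` for complex `a` and integer `n`. -/
noncomputable def poch (a : ℂ) (n : ℤ) : ℂ :=
  if 0 ≤ n then ∏ j ∈ Finset.range n.toNat, (a + (j : ℂ))
  else (∏ j ∈ Finset.range (-n).toNat, (a + (n : ℂ) + (j : ℂ)))⁻¹

/-- Gauss hypergeometric series `F(a,b;c;x)`. -/
noncomputable def hypF (a b c x : ℂ) : ℂ :=
  ∑' j : ℕ, (poch a (j : ℤ) * poch b (j : ℤ)) / ((j.factorial : ℂ) * poch c (j : ℤ)) * x ^ j

/-- The Jacobi difference operator `L_{α,β;ε}`. -/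
noncomputable def jacobiL (α β ε : ℂ) (f : ℤ → ℂ) (n : ℤ) : ℂ :=
  (2 * ((n : ℂ) + ε + 1) * ((n : ℂ) + ε + α + β + 1) /
      ((2 * (n : ℂ) + 2 * ε + α + β + 1) * (2 * (n : ℂ) + 2 * ε + α + β + 2))) * f (n + 1)
  + ((β ^ 2 - α ^ 2) /
      ((2 * (n : ℂ) + 2 * ε + α + β) * (2 * (n : ℂ) + 2 * ε + α + β + 2))) * f n
  + (2 * ((n : ℂ) + ε + α) * ((n : ℂ) + ε + β) /
      ((2 * (n : ℂ) + 2 * ε + α + β) * (2 * (n : ℂ) + 2 * ε + α + β + 1))) * f (n - 1)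

/-- The eigenvalue `λ_ε(n) = (n+ε)(n+ε+α+β+1)`. -/
noncomputable def lamE (α β ε : ℂ) (n : ℤ) : ℂ := ((n : ℂ) + ε) * ((n : ℂ) + ε + α + β + 1)

/-- The function `p^{α,β}_ε(n,z)` (case `α ∉ ℤ_{<0}`). -/
noncomputable def pStd (α β ε : ℂ) (n : ℤ) (z : ℂ) : ℂ :=
  (poch (ε + α + 1) n / poch (ε + 1) n) *
    hypF (-((n : ℂ) + ε)) ((n : ℂ) + ε + α + β + 1) (α + 1) ((1 - z) / 2)

/-- None of `ε, ε+α, ε+β, ε+α+β, 2ε+α+β` is an integer. -/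
def GoodParams (α β ε : ℂ) : Prop :=
  ∀ m : ℤ, ε ≠ (m : ℂ) ∧ ε + α ≠ (m : ℂ) ∧ ε + β ≠ (m : ℂ) ∧
    ε + α + β ≠ (m : ℂ) ∧ 2 * ε + α + β ≠ (m : ℂ)

/-- `φ₊^{(i)}(n)`. -/
noncomputable def phiPd (α β ε : ℂ) (i : ℕ) (n : ℤ) : ℂ :=
  (poch (ε + α + 1) n / poch (ε + 1) n) *
    (poch (-((n : ℂ) + ε)) (i : ℤ) * poch ((n : ℂ) + ε + α + β + 1) (i : ℤ)) /
      ((-2 : ℂ) ^ i * (i.factorial : ℂ) * poch (α + 1) (i : ℤ))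

/-- `ψ₊^{(i)}(n)`. -/
noncomputable def psiPd (α β ε : ℂ) (i : ℕ) (n : ℤ) : ℂ :=
  (poch (ε + β + 1) n / poch (ε + α + β + 1) n) *
    (poch (-((n : ℂ) + ε + α + β)) (i : ℤ) * poch ((n : ℂ) + ε + 1) (i : ℤ)) /
      ((-2 : ℂ) ^ i * (i.factorial : ℂ) * poch (-α + 1) (i : ℤ))

/-- `φ₋^{(i)}(n)`. -/
noncomputable def phiMd (α β ε : ℂ) (i : ℕ) (n : ℤ) : ℂ :=
  (-1 : ℂ) ^ n * (poch (ε + β + 1) n / poch (ε + 1) n) *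
    (poch (-((n : ℂ) + ε)) (i : ℤ) * poch ((n : ℂ) + ε + α + β + 1) (i : ℤ)) /
      ((2 : ℂ) ^ i * (i.factorial : ℂ) * poch (β + 1) (i : ℤ))

/-- `ψ₋^{(i)}(n)`. -/
noncomputable def psiMd (α β ε : ℂ) (i : ℕ) (n : ℤ) : ℂ :=
  (-1 : ℂ) ^ n * (poch (ε + α + 1) n / poch (ε + α + β + 1) n) *
    (poch (-((n : ℂ) + ε + α + β)) (i : ℤ) * poch ((n : ℂ) + ε + 1) (i : ℤ)) /
      ((2 : ℂ) ^ i * (i.factorial : ℂ) * poch (-β + 1) (i : ℤ))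

/-- The Jacobi difference operator as a linear endomorphism of `ℤ → ℂ`. -/
noncomputable def jacobiLin (α β ε : ℂ) : Module.End ℂ (ℤ → ℂ) where
  toFun f := jacobiL α β ε f
  map_add' f g := by
    funext n
    simp only [jacobiL, Pi.add_apply]
    ring
  map_smul' c f := by
    funext n
    simp only [jacobiL, Pi.smul_apply, smul_eq_mul, RingHom.id_apply]
    ring

/-!
Put `x = n + ε`. Dividing by the eigenfunction `(ε+α+1)_n / (ε+1)_n` of `L` turns `L - 1` into a
second-order difference operator in `x` without zeroth-order term. This operator lowers the
degree of the products `(-x)_i (x+α+β+1)_i` by one, so the `φ₊^{(i)}` form a Jordan chain for the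
eigenvalue `1`. The operator `L` is unchanged under `(α, β, ε) ↦ (-α, -β, ε+α+β)`, which carries
`φ₊` to `ψ₊`. Two chains over a basis of the two-dimensional space `Ker (L - 1)` span
`Ker (L - 1)^k`. Multiplication by `(-1)^n` intertwines `L_{α,β;ε}` with `-L_{β,α;ε}` and so carries
these results over to the eigenvalue `-1`; the two kernels are put together by the coprimality of
`(X - 1)^k` and `(X + 1)^l`.
-/

section LinearAlgebra

theorem ker_pow_eq_span_of_jordan_chains {R V : Type*} [Ring R] [AddCommGroup V] [Module R V]
    {T : Module.End R V} {B : ℕ → Set V} (hker : LinearMap.ker T = Submodule.span R (B 0))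
    {k : ℕ} (hstep : ∀ j, j + 1 < k → T '' B (j + 1) = B j) :
    LinearMap.ker (T ^ k) = Submodule.span R (⋃ j < k, B j) := by
  induction k with
  | zero => simp [Module.End.one_eq_id, LinearMap.ker_id]
  | succ k ih =>
    have himage : T '' (⋃ j < k, B (j + 1)) = ⋃ j < k, B j := by
      simp only [Set.image_iUnion]
      exact Set.iUnion₂_congr fun j hj => hstep j (by lia)
    calc
      LinearMap.ker (T ^ (k + 1)) = (LinearMap.ker (T ^ k)).comap T := by
        rw [pow_succ, Module.End.mul_eq_comp, LinearMap.ker_comp]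
      _ = ((Submodule.span R (⋃ j < k, B (j + 1))).map T).comap T := by
        rw [ih fun j hj => hstep j (by lia), Submodule.map_span, himage]
      _ = Submodule.span R (⋃ j < k + 1, B j) := by
        rw [Submodule.comap_map_eq, hker, sup_comm, ← Submodule.span_union,
          Set.biUnion_lt_succ']

variable {K V : Type*} [Field K] [AddCommGroup V] [Module K V]

theorem isCoprime_X_sub_C_pow {a b : K} (hab : a ≠ b) (k l : ℕ) :
    IsCoprime ((Polynomial.X - Polynomial.C a) ^ k) ((Polynomial.X - Polynomial.C b) ^ l) :=
  (Polynomial.isCoprime_X_sub_C_of_isUnit_sub (sub_ne_zero.2 hab).isUnit).pow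

theorem disjoint_ker_sub_algebraMap_pow (T : Module.End K V) {a b : K} (hab : a ≠ b) (k l : ℕ) :
    Disjoint (LinearMap.ker ((T - algebraMap K (Module.End K V) a) ^ k))
      (LinearMap.ker ((T - algebraMap K (Module.End K V) b) ^ l)) := by
  simpa using Polynomial.disjoint_ker_aeval_of_isCoprime T (isCoprime_X_sub_C_pow hab k l)

theorem ker_sub_algebraMap_pow_mul (T : Module.End K V) {a b : K} (hab : a ≠ b) (k l : ℕ) :
    LinearMap.ker ((T - algebraMap K (Module.End K V) a) ^ k *
        (T - algebraMap K (Module.End K V) b) ^ l) =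
      LinearMap.ker ((T - algebraMap K (Module.End K V) a) ^ k) ⊔
        LinearMap.ker ((T - algebraMap K (Module.End K V) b) ^ l) := by
  simpa using
    (Polynomial.sup_ker_aeval_eq_ker_aeval_mul_of_coprime T (isCoprime_X_sub_C_pow hab k l)).symm

theorem eq_span_pair_of_casoratian_ne_zero {X : Type*} {S : Submodule K (X → K)} {s t : X}
    (hS : ∀ f ∈ S, f s = 0 → f t = 0 → f = 0) {u v : X → K} (hu : u ∈ S) (hv : v ∈ S)
    (hdet : u s * v t - u t * v s ≠ 0) : S = Submodule.span K {u, v} := by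
  refine le_antisymm (fun f hf => ?_) (Submodule.span_le.2 (Set.pair_subset hu hv))
  -- Cramer's rule for the values at `s` and `t`
  let a := (f s * v t - f t * v s) / (u s * v t - u t * v s)
  let b := (u s * f t - u t * f s) / (u s * v t - u t * v s)
  have ha : a * (u s * v t - u t * v s) = f s * v t - f t * v s := div_mul_cancel₀ _ hdet
  have hb : b * (u s * v t - u t * v s) = u s * f t - u t * f s := div_mul_cancel₀ _ hdet
  refine Submodule.mem_span_pair.2 ⟨a, b, sub_eq_zero.1 (hS _ ?_ ?_ ?_)⟩
  · exact S.sub_mem (S.add_mem (S.smul_mem a hu) (S.smul_mem b hv)) hf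
  · refine (mul_eq_zero.1 ?_).resolve_left hdet
    simp only [Pi.sub_apply, Pi.add_apply, Pi.smul_apply, smul_eq_mul]
    linear_combination u s * ha + v s * hb
  · refine (mul_eq_zero.1 ?_).resolve_left hdet
    simp only [Pi.sub_apply, Pi.add_apply, Pi.smul_apply, smul_eq_mul]
    linear_combination u t * ha + v t * hb

theorem eq_zero_of_three_term_recurrence {R : Type*} [Ring R] [NoZeroDivisors R]
    {a b c f : ℤ → R} {μ : R} (ha : ∀ n, a n ≠ 0) (hc : ∀ n, c n ≠ 0)
    (hf : ∀ n, a n * f (n + 1) + b n * f n + c n * f (n - 1) = μ * f n)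
    (h0 : f 0 = 0) (h1 : f 1 = 0) : f = 0 := by
  have hconsecutive (n : ℤ) : f n = 0 ∧ f (n + 1) = 0 := by
    induction n using Int.induction_on with
    | zero => exact ⟨h0, by simpa using h1⟩
    | succ n ih => exact ⟨ih.2, by simpa [ih.1, ih.2, ha] using hf (n + 1)⟩
    | pred n ih => exact ⟨by simpa [ih.1, ih.2, hc] using hf (-n), by simpa using ih.1⟩
  exact funext fun n => (hconsecutive n).1

end LinearAlgebra

section Pochhammer

theorem poch_natCast (a : ℂ) (i : ℕ) : poch a i = ∏ j ∈ Finset.range i, (a + j) := by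
  simp [poch]

theorem poch_natCast_succ (a : ℂ) (i : ℕ) :
    poch a ((i + 1 : ℕ) : ℤ) = poch a i * (a + i) := by
  rw [poch_natCast, poch_natCast, Finset.prod_range_succ]

theorem poch_natCast_succ' (a : ℂ) (i : ℕ) :
    poch a ((i + 1 : ℕ) : ℤ) = a * poch (a + 1) i := by
  rw [poch_natCast, poch_natCast, Finset.prod_range_succ', mul_comm]
  simp [add_assoc, add_comm (1 : ℂ)]

theorem mul_poch_add_one (a : ℂ) (i : ℕ) : a * poch (a + 1) i = poch a i * (a + i) := by
  rw [← poch_natCast_succ', poch_natCast_succ]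

theorem poch_neg_natCast (a : ℂ) (m : ℕ) :
    poch a (-(m : ℤ)) = (∏ j ∈ Finset.range m, (a - m + j))⁻¹ := by
  rcases m with _ | m
  · simp [poch]
  · rw [poch, if_neg (by lia), neg_neg, Int.toNat_natCast]
    push_cast
    rfl

theorem poch_add_one {a : ℂ} {n : ℤ} (h : a + n ≠ 0) : poch a (n + 1) = poch a n * (a + n) := by
  obtain ⟨m, rfl | rfl⟩ : ∃ m : ℕ, n = m ∨ n = -((m + 1 : ℕ) : ℤ) := by
    rcases n with m | m
    · exact ⟨m, .inl rfl⟩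
    · exact ⟨m, .inr rfl⟩
  · exact_mod_cast poch_natCast_succ a m
  · have hshift : -((m + 1 : ℕ) : ℤ) + 1 = -(m : ℤ) := by push_cast; ring
    have hfactor (j : ℕ) : a - ((m + 1 : ℕ) : ℂ) + ((j + 1 : ℕ) : ℂ) = a - m + j := by
      push_cast; ring
    have hlast : a - ((m + 1 : ℕ) : ℂ) + ((0 : ℕ) : ℂ) = a + ((-((m + 1 : ℕ) : ℤ) : ℤ) : ℂ) := by
      push_cast; ring
    rw [hshift, poch_neg_natCast, poch_neg_natCast, Finset.prod_range_succ', hlast, mul_inv,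
      inv_mul_cancel_right₀ h]
    simp only [hfactor]

/-- The product `(-x)_i (x + σ)_i`. It equals `∏_{j < i} (j (j + σ) - x (x + σ))`, a polynomial
of degree `i` in `x (x + σ)`. -/
noncomputable def symmPoch (σ : ℂ) (i : ℕ) (x : ℂ) : ℂ := poch (-x) i * poch (x + σ) i

theorem symmPoch_add_one_sub (σ : ℂ) (j : ℕ) (x : ℂ) :
    symmPoch σ (j + 1) (x + 1) - symmPoch σ (j + 1) x =
      -((j + 1) * (2 * x + σ + 1)) * (poch (-x) j * poch (x + σ + 1) j) := by
  have hup : symmPoch σ (j + 1) (x + 1) =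
      -(x + 1) * poch (-x) j * (poch (x + σ + 1) j * (x + σ + 1 + j)) := by
    rw [symmPoch, poch_natCast_succ', poch_natCast_succ, show -(x + 1) + 1 = -x by ring,
      add_right_comm]
  have hmid : symmPoch σ (j + 1) x =
      poch (-x) j * (-x + j) * ((x + σ) * poch (x + σ + 1) j) := by
    rw [symmPoch, poch_natCast_succ, poch_natCast_succ']
  rw [hup, hmid]
  ring

end Pochhammer

section GaugedOperator

/-- The operator `L - 1` divided by the eigenfunction `jacobiWeight`, in the variable
`x = n + ε`. -/
noncomputable def gaugedJacobi (α β : ℂ) (G : ℂ → ℂ) (x : ℂ) : ℂ :=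
  2 * (x + α + 1) * (x + α + β + 1) / ((2 * x + α + β + 1) * (2 * x + α + β + 2)) *
      (G (x + 1) - G x) +
    2 * x * (x + β) / ((2 * x + α + β) * (2 * x + α + β + 1)) * (G (x - 1) - G x)

theorem gaugedJacobi_symmPoch_zero (α β σ x : ℂ) : gaugedJacobi α β (symmPoch σ 0) x = 0 := by
  simp [gaugedJacobi, symmPoch, poch]

theorem gaugedJacobi_symmPoch_succ {α β x : ℂ} (h₀ : 2 * x + α + β ≠ 0)
    (h₁ : 2 * x + α + β + 1 ≠ 0) (h₂ : 2 * x + α + β + 2 ≠ 0) (j : ℕ) :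
    gaugedJacobi α β (symmPoch (α + β + 1) (j + 1)) x =
      -2 * (j + 1) * (α + 1 + j) * symmPoch (α + β + 1) j x := by
  set σ := α + β + 1 with hσ
  have hforward : symmPoch σ (j + 1) (x + 1) - symmPoch σ (j + 1) x =
      -((j + 1) * (2 * x + α + β + 2)) * (poch (-x) j * poch (x + σ + 1) j) := by
    rw [symmPoch_add_one_sub, hσ]; ring
  have hbackward : symmPoch σ (j + 1) (x - 1) - symmPoch σ (j + 1) x =
      (j + 1) * (2 * x + α + β) * (poch (-x + 1) j * poch (x + σ) j) := by
    have h := symmPoch_add_one_sub σ j (x - 1)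
    rw [sub_add_cancel, show -(x - 1) = -x + 1 by ring, show x - 1 + σ + 1 = x + σ by ring] at h
    rw [hσ] at h ⊢
    linear_combination -h
  have hlow : x * poch (-x + 1) j = -(poch (-x) j * (-x + j)) := by
    linear_combination -mul_poch_add_one (-x) j
  have hhigh : (x + α + β + 1) * poch (x + σ + 1) j = poch (x + σ) j * (x + α + β + 1 + j) := by
    linear_combination mul_poch_add_one (x + σ) j +
      (poch (x + σ) j - poch (x + σ + 1) j) * hσ
  rw [gaugedJacobi, hforward, hbackward, symmPoch]
  field_simp
  linear_combination (-(x + α + 1) * poch (-x) j) * hhigh + (x + β) * poch (x + σ) j * hlow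

end GaugedOperator

section JordanChains

theorem ne_zero_of_eq_add_intCast {a : ℂ} (ha : ∀ m : ℤ, a ≠ m) ⦃z : ℂ⦄ (m : ℤ)
    (hz : z = a + m) : z ≠ 0 := by
  rintro rfl
  exact ha (-m) (by push_cast; linear_combination -hz)

/-- The weight `(ε+α+1)_n / (ε+1)_n`, which is `φ₊^{(0)}(n)`. -/
noncomputable def jacobiWeight (α ε : ℂ) (n : ℤ) : ℂ := poch (ε + α + 1) n / poch (ε + 1) n

theorem jacobiWeight_add_one {α ε : ℂ} {n : ℤ} (hε : n + ε + 1 ≠ 0) (hα : n + ε + α + 1 ≠ 0) :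
    jacobiWeight α ε (n + 1) = jacobiWeight α ε n * ((n + ε + α + 1) / (n + ε + 1)) := by
  have hnum : ε + α + 1 + n = n + ε + α + 1 := by ring
  have hden : ε + 1 + n = n + ε + 1 := by ring
  rw [jacobiWeight, poch_add_one (hnum ▸ hα), poch_add_one (hden ▸ hε), mul_div_mul_comm, hnum,
    hden, jacobiWeight]

theorem jacobiWeight_sub_one {α ε : ℂ} {n : ℤ} (hε : n + ε ≠ 0) (hα : n + ε + α ≠ 0) :
    jacobiWeight α ε (n - 1) = jacobiWeight α ε n * ((n + ε) / (n + ε + α)) := by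
  have hnum : ((n - 1 : ℤ) : ℂ) + ε + α + 1 = n + ε + α := by push_cast; ring
  have hden : ((n - 1 : ℤ) : ℂ) + ε + 1 = n + ε := by push_cast; ring
  have h := jacobiWeight_add_one (hden ▸ hε) (hnum ▸ hα)
  rw [sub_add_cancel, hnum, hden] at h
  rw [h]
  field_simp

theorem phiPd_eq_smul (α β ε : ℂ) (i : ℕ) :
    phiPd α β ε i = ((-2) ^ i * i.factorial * poch (α + 1) i)⁻¹ •
      fun n : ℤ => jacobiWeight α ε n * symmPoch (α + β + 1) i (n + ε) := by
  funext n
  simp only [phiPd, jacobiWeight, symmPoch, Pi.smul_apply, smul_eq_mul, ← add_assoc]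
  ring

variable {α β ε : ℂ}

theorem GoodParams.denominators_ne_zero (hg : GoodParams α β ε) (n : ℤ) :
    2 * (n + ε) + α + β ≠ 0 ∧ 2 * (n + ε) + α + β + 1 ≠ 0 ∧ 2 * (n + ε) + α + β + 2 ≠ 0 := by
  have h := ne_zero_of_eq_add_intCast fun m => (hg m).2.2.2.2
  exact ⟨h (2 * n) (by push_cast; ring), h (2 * n + 1) (by push_cast; ring),
    h (2 * n + 2) (by push_cast; ring)⟩

theorem jacobiLin_sub_one_weight_mul (hg : GoodParams α β ε) (G : ℂ → ℂ) :
    (jacobiLin α β ε - 1) (fun n => jacobiWeight α ε n * G (n + ε)) =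
      fun n => jacobiWeight α ε n * gaugedJacobi α β G (n + ε) := by
  funext n
  have hε := ne_zero_of_eq_add_intCast fun m => (hg m).1
  have hα := ne_zero_of_eq_add_intCast fun m => (hg m).2.1
  have hε₀ : n + ε ≠ 0 := hε n (by ring)
  have hε₁ : n + ε + 1 ≠ 0 := hε (n + 1) (by push_cast; ring)
  have hα₀ : n + ε + α ≠ 0 := hα n (by ring)
  have hα₁ : n + ε + α + 1 ≠ 0 := hα (n + 1) (by push_cast; ring)
  obtain ⟨h₀, h₁, h₂⟩ := hg.denominators_ne_zero n
  change jacobiL α β ε (fun n => jacobiWeight α ε n * G (n + ε)) n -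
    jacobiWeight α ε n * G (n + ε) = _
  have hsucc : ((n + 1 : ℤ) : ℂ) + ε = n + ε + 1 := by push_cast; ring
  have hpred : ((n - 1 : ℤ) : ℂ) + ε = n + ε - 1 := by push_cast; ring
  have htwo : 2 * (n : ℂ) + 2 * ε = 2 * (n + ε) := by ring
  rw [jacobiL, gaugedJacobi, jacobiWeight_add_one hε₁ hα₁, jacobiWeight_sub_one hε₀ hα₀, hsucc,
    hpred, htwo]
  field_simp
  ring

theorem jacobiLin_sub_one_phiPd_zero (hg : GoodParams α β ε) :
    (jacobiLin α β ε - 1) (phiPd α β ε 0) = 0 := by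
  rw [phiPd_eq_smul, map_smul, jacobiLin_sub_one_weight_mul hg]
  simp only [gaugedJacobi_symmPoch_zero, mul_zero]
  exact smul_zero _

theorem jacobiLin_sub_one_phiPd_succ (hg : GoodParams α β ε) {j : ℕ} (hj : α + 1 + j ≠ 0) :
    (jacobiLin α β ε - 1) (phiPd α β ε (j + 1)) = phiPd α β ε j := by
  rw [phiPd_eq_smul, map_smul, jacobiLin_sub_one_weight_mul hg, phiPd_eq_smul]
  funext n
  obtain ⟨h₀, h₁, h₂⟩ := hg.denominators_ne_zero n
  have hj₁ : (j : ℂ) + 1 ≠ 0 := by exact_mod_cast j.succ_ne_zero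
  simp only [Pi.smul_apply, smul_eq_mul]
  rw [gaugedJacobi_symmPoch_succ h₀ h₁ h₂,
    poch_natCast_succ, pow_succ, Nat.factorial_succ]
  push_cast
  field_simp

theorem GoodParams.dual (hg : GoodParams α β ε) : GoodParams (-α) (-β) (ε + α + β) := by
  intro m
  obtain ⟨hε, hα, hβ, hαβ, hdenom⟩ := hg m
  refine ⟨hαβ, ?_, ?_, ?_, ?_⟩
  · rwa [show ε + α + β + -α = ε + β by ring]
  · rwa [show ε + α + β + -β = ε + α by ring]
  · rwa [show ε + α + β + -α + -β = ε by ring]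
  · rwa [show 2 * (ε + α + β) + -α + -β = 2 * ε + α + β by ring]

theorem jacobiLin_dual (α β ε : ℂ) : jacobiLin (-α) (-β) (ε + α + β) = jacobiLin α β ε := by
  ext f n
  change jacobiL _ _ _ _ _ = jacobiL _ _ _ _ _
  rw [jacobiL, jacobiL,
    show 2 * (n : ℂ) + 2 * (ε + α + β) + -α + -β = 2 * n + 2 * ε + α + β by ring]
  ring

theorem psiPd_eq_phiPd_dual (α β ε : ℂ) (i : ℕ) :
    psiPd α β ε i = phiPd (-α) (-β) (ε + α + β) i := by
  funext n
  rw [psiPd, phiPd, show ε + α + β + -α + 1 = ε + β + 1 by ring,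
    show (n : ℂ) + (ε + α + β) + -α + -β + 1 = n + ε + 1 by ring,
    show (n : ℂ) + (ε + α + β) = n + ε + α + β by ring]

theorem jacobiLin_sub_one_psiPd_zero (hg : GoodParams α β ε) :
    (jacobiLin α β ε - 1) (psiPd α β ε 0) = 0 := by
  rw [psiPd_eq_phiPd_dual, ← jacobiLin_dual]
  exact jacobiLin_sub_one_phiPd_zero hg.dual

theorem jacobiLin_sub_one_psiPd_succ (hg : GoodParams α β ε) {j : ℕ} (hj : -α + 1 + j ≠ 0) :
    (jacobiLin α β ε - 1) (psiPd α β ε (j + 1)) = psiPd α β ε j := by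
  rw [psiPd_eq_phiPd_dual, psiPd_eq_phiPd_dual, ← jacobiLin_dual]
  exact jacobiLin_sub_one_phiPd_succ hg.dual hj

end JordanChains

section EigenvalueOne

variable {α β ε : ℂ}

theorem eq_zero_of_mem_ker_jacobiLin_sub_one (hg : GoodParams α β ε) {f : ℤ → ℂ}
    (hf : f ∈ LinearMap.ker (jacobiLin α β ε - 1)) (h0 : f 0 = 0) (h1 : f 1 = 0) : f = 0 := by
  have hrec (n : ℤ) : jacobiL α β ε f n = 1 * f n := by
    rw [one_mul]
    exact sub_eq_zero.1 (congrFun hf n)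
  have hdenom (n : ℤ) := mul_add (2 : ℂ) n ε ▸ hg.denominators_ne_zero n
  refine eq_zero_of_three_term_recurrence (fun n => ?_) (fun n => ?_) hrec h0 h1
  · have hε : n + ε + 1 ≠ 0 :=
      ne_zero_of_eq_add_intCast (fun m => (hg m).1) (n + 1) (by push_cast; ring)
    have hαβ : n + ε + α + β + 1 ≠ 0 :=
      ne_zero_of_eq_add_intCast (fun m => (hg m).2.2.2.1) (n + 1) (by push_cast; ring)
    simp [hε, hαβ, hdenom n]
  · have hα : n + ε + α ≠ 0 := ne_zero_of_eq_add_intCast (fun m => (hg m).2.1) n (by ring)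
    have hβ : n + ε + β ≠ 0 := ne_zero_of_eq_add_intCast (fun m => (hg m).2.2.1) n (by ring)
    simp [hα, hβ, hdenom n]

theorem casoratian_phiPd_psiPd_ne_zero (hg : GoodParams α β ε) (hα : α ≠ 0) :
    phiPd α β ε 0 0 * psiPd α β ε 0 1 - phiPd α β ε 0 1 * psiPd α β ε 0 0 ≠ 0 := by
  have hε : ε + 1 ≠ 0 := ne_zero_of_eq_add_intCast (fun m => (hg m).1) 1 (by simp)
  have hαβ : ε + α + β + 1 ≠ 0 := ne_zero_of_eq_add_intCast (fun m => (hg m).2.2.2.1) 1 (by simp)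
  have hdenom : 2 * ε + α + β + 2 ≠ 0 :=
    ne_zero_of_eq_add_intCast (fun m => (hg m).2.2.2.2) 2 (by simp)
  have hφ₀ : phiPd α β ε 0 0 = 1 := by simp [phiPd, poch]
  have hφ₁ : phiPd α β ε 0 1 = (ε + α + 1) / (ε + 1) := by simp [phiPd, poch]
  have hψ₀ : psiPd α β ε 0 0 = 1 := by simp [psiPd, poch]
  have hψ₁ : psiPd α β ε 0 1 = (ε + β + 1) / (ε + α + β + 1) := by simp [psiPd, poch]
  have hvalue : phiPd α β ε 0 0 * psiPd α β ε 0 1 - phiPd α β ε 0 1 * psiPd α β ε 0 0 =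
      -(α * (2 * ε + α + β + 2)) / ((ε + 1) * (ε + α + β + 1)) := by
    rw [hφ₀, hφ₁, hψ₀, hψ₁]
    field_simp
    ring
  rw [hvalue]
  exact div_ne_zero (neg_ne_zero.2 (mul_ne_zero hα hdenom)) (mul_ne_zero hε hαβ)

theorem ker_jacobiLin_sub_one (hg : GoodParams α β ε) (hα : α ≠ 0) :
    LinearMap.ker (jacobiLin α β ε - 1) = Submodule.span ℂ {phiPd α β ε 0, psiPd α β ε 0} :=
  eq_span_pair_of_casoratian_ne_zero (fun _ => eq_zero_of_mem_ker_jacobiLin_sub_one hg)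
    (jacobiLin_sub_one_phiPd_zero hg) (jacobiLin_sub_one_psiPd_zero hg)
    (casoratian_phiPd_psiPd_ne_zero hg hα)

theorem add_one_add_natCast_ne_zero {k : ℕ} (hα : ∀ m : ℤ, |m| < k → α ≠ m) {j : ℕ}
    (hj : j + 1 < k) : α + 1 + j ≠ 0 := fun h =>
  hα (-(j + 1)) (abs_lt.2 ⟨by lia, by lia⟩) (by push_cast; linear_combination h)

theorem neg_add_one_add_natCast_ne_zero {k : ℕ} (hα : ∀ m : ℤ, |m| < k → α ≠ m) {j : ℕ}
    (hj : j + 1 < k) : -α + 1 + j ≠ 0 := fun h =>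
  hα (j + 1) (abs_lt.2 ⟨by lia, by lia⟩) (by push_cast; linear_combination -h)

theorem ne_zero_of_forall_abs_lt {k : ℕ} (hk : 1 ≤ k) (hα : ∀ m : ℤ, |m| < k → α ≠ m) : α ≠ 0 := by
  simpa using hα 0 (by simpa using Nat.zero_lt_of_lt hk)

theorem ker_jacobiLin_sub_one_pow (hg : GoodParams α β ε) {k : ℕ} (hk : 1 ≤ k)
    (hα : ∀ m : ℤ, |m| < k → α ≠ m) :
    LinearMap.ker ((jacobiLin α β ε - 1) ^ k) =
      Submodule.span ℂ (⋃ i < k, {phiPd α β ε i, psiPd α β ε i}) := by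
  refine ker_pow_eq_span_of_jordan_chains
    (ker_jacobiLin_sub_one hg (ne_zero_of_forall_abs_lt hk hα)) fun j hj => ?_
  rw [Set.image_pair, jacobiLin_sub_one_phiPd_succ hg (add_one_add_natCast_ne_zero hα hj),
    jacobiLin_sub_one_psiPd_succ hg (neg_add_one_add_natCast_ne_zero hα hj)]

end EigenvalueOne

section EigenvalueNegOne

/-- Multiplication by `(-1)^n`, exchanging the eigenvalues `1` and `-1`. -/
noncomputable def alternate : (ℤ → ℂ) ≃ₗ[ℂ] (ℤ → ℂ) :=
  .ofInvolutive
    { toFun f n := (-1) ^ n * f n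
      map_add' f g := funext fun n => mul_add _ _ _
      map_smul' c f := funext fun n => mul_left_comm _ _ _ } fun f => funext fun n => by
    simp [← mul_assoc, ← mul_zpow]

theorem alternate_apply (f : ℤ → ℂ) (n : ℤ) : alternate f n = (-1) ^ n * f n := rfl

theorem phiMd_eq_smul_alternate (α β ε : ℂ) (i : ℕ) :
    phiMd α β ε i = (-1 : ℂ) ^ i • alternate (phiPd β α ε i) := by
  funext n
  have hneg : (-2 : ℂ) ^ i = (-1) ^ i * 2 ^ i := by rw [← mul_pow]; norm_num
  rw [Pi.smul_apply, alternate_apply, phiMd, phiPd, hneg, add_right_comm _ β α, smul_eq_mul]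
  field_simp

theorem psiMd_eq_smul_alternate (α β ε : ℂ) (i : ℕ) :
    psiMd α β ε i = (-1 : ℂ) ^ i • alternate (psiPd β α ε i) := by
  funext n
  have hneg : (-2 : ℂ) ^ i = (-1) ^ i * 2 ^ i := by rw [← mul_pow]; norm_num
  rw [Pi.smul_apply, alternate_apply, psiMd, psiPd, hneg, add_right_comm _ β α,
    add_right_comm _ β α, smul_eq_mul]
  field_simp

theorem jacobiLin_add_one_alternate (α β ε : ℂ) (f : ℤ → ℂ) :
    (jacobiLin α β ε + 1) (alternate f) = -alternate ((jacobiLin β α ε - 1) f) := by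
  funext n
  change jacobiL α β ε (alternate f) n + alternate f n =
    -((-1) ^ n * (jacobiL β α ε f n - f n))
  simp only [jacobiL, alternate_apply]
  rw [zpow_add₀ (by norm_num), zpow_sub₀ (by norm_num), zpow_one, add_right_comm _ β α]
  ring

variable {α β ε : ℂ}

theorem GoodParams.swap (hg : GoodParams α β ε) : GoodParams β α ε := by
  intro m
  obtain ⟨hε, hα, hβ, hαβ, hdenom⟩ := hg m
  exact ⟨hε, hβ, hα, by rwa [add_right_comm], by rwa [add_right_comm]⟩

theorem ker_jacobiLin_add_one (hg : GoodParams α β ε) (hβ : β ≠ 0) :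
    LinearMap.ker (jacobiLin α β ε + 1) = Submodule.span ℂ {phiMd α β ε 0, psiMd α β ε 0} := by
  have hconj : LinearMap.ker (jacobiLin α β ε + 1) =
      (LinearMap.ker (jacobiLin β α ε - 1)).map (alternate : (ℤ → ℂ) →ₗ[ℂ] (ℤ → ℂ)) := by
    ext f
    obtain ⟨g, rfl⟩ := alternate.surjective f
    simp [jacobiLin_add_one_alternate, -LinearMap.sub_apply, -LinearMap.add_apply]
  rw [hconj, ker_jacobiLin_sub_one hg.swap hβ, Submodule.map_span, Set.image_pair,
    phiMd_eq_smul_alternate, psiMd_eq_smul_alternate]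
  simp

theorem jacobiLin_add_one_phiMd_succ (hg : GoodParams α β ε) {j : ℕ} (hj : β + 1 + j ≠ 0) :
    (jacobiLin α β ε + 1) (phiMd α β ε (j + 1)) = phiMd α β ε j := by
  rw [phiMd_eq_smul_alternate, map_smul, jacobiLin_add_one_alternate,
    jacobiLin_sub_one_phiPd_succ hg.swap hj, phiMd_eq_smul_alternate, pow_succ, mul_neg_one,
    neg_smul_neg]

theorem jacobiLin_add_one_psiMd_succ (hg : GoodParams α β ε) {j : ℕ} (hj : -β + 1 + j ≠ 0) :
    (jacobiLin α β ε + 1) (psiMd α β ε (j + 1)) = psiMd α β ε j := by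
  rw [psiMd_eq_smul_alternate, map_smul, jacobiLin_add_one_alternate,
    jacobiLin_sub_one_psiPd_succ hg.swap hj, psiMd_eq_smul_alternate, pow_succ, mul_neg_one,
    neg_smul_neg]

theorem ker_jacobiLin_add_one_pow (hg : GoodParams α β ε) {l : ℕ} (hl : 1 ≤ l)
    (hβ : ∀ m : ℤ, |m| < l → β ≠ m) :
    LinearMap.ker ((jacobiLin α β ε + 1) ^ l) =
      Submodule.span ℂ (⋃ i < l, {phiMd α β ε i, psiMd α β ε i}) := by
  refine ker_pow_eq_span_of_jordan_chains
    (ker_jacobiLin_add_one hg (ne_zero_of_forall_abs_lt hl hβ)) fun j hj => ?_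
  rw [Set.image_pair, jacobiLin_add_one_phiMd_succ hg (add_one_add_natCast_ne_zero hβ hj),
    jacobiLin_add_one_psiMd_succ hg (neg_add_one_add_natCast_ne_zero hβ hj)]

end EigenvalueNegOne

/-- The kernels of `(L-1)^k` and `(L+1)^l` intersect trivially,
and the kernel of the composite `(L-1)^k ∘ (L+1)^l` is their (direct) sum,
namely the span of the `2(k+l)` functions `φ₊^{(i)}, ψ₊^{(i)}, φ₋^{(j)}, ψ₋^{(j)}`. -/
theorem stmt5 (α β ε : ℂ) (hgood : GoodParams α β ε) (k l : ℕ)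
    (hk : 1 ≤ k) (hl : 1 ≤ l)
    (hkα : ∀ m : ℤ, α = (m : ℂ) → (k : ℤ) ≤ |m|)
    (hlβ : ∀ m : ℤ, β = (m : ℂ) → (l : ℤ) ≤ |m|) :
    LinearMap.ker ((jacobiLin α β ε - 1 : Module.End ℂ (ℤ → ℂ)) ^ k) ⊓
      LinearMap.ker ((jacobiLin α β ε + 1 : Module.End ℂ (ℤ → ℂ)) ^ l) = ⊥ ∧
    LinearMap.ker (((jacobiLin α β ε - 1 : Module.End ℂ (ℤ → ℂ)) ^ k) *
        ((jacobiLin α β ε + 1 : Module.End ℂ (ℤ → ℂ)) ^ l))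
      = LinearMap.ker ((jacobiLin α β ε - 1 : Module.End ℂ (ℤ → ℂ)) ^ k) ⊔
        LinearMap.ker ((jacobiLin α β ε + 1 : Module.End ℂ (ℤ → ℂ)) ^ l) ∧
    LinearMap.ker (((jacobiLin α β ε - 1 : Module.End ℂ (ℤ → ℂ)) ^ k) *
        ((jacobiLin α β ε + 1 : Module.End ℂ (ℤ → ℂ)) ^ l))
      = Submodule.span ℂ {g : ℤ → ℂ |
          (∃ i < k, g = phiPd α β ε i ∨ g = psiPd α β ε i) ∨
          (∃ j < l, g = phiMd α β ε j ∨ g = psiMd α β ε j)} := by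
  have hα : ∀ m : ℤ, |m| < k → α ≠ m := fun m hm h => (hkα m h).not_gt hm
  have hβ : ∀ m : ℤ, |m| < l → β ≠ m := fun m hm h => (hlβ m h).not_gt hm
  have hne : (1 : ℂ) ≠ -1 := by norm_num
  have hdisj := disjoint_ker_sub_algebraMap_pow (jacobiLin α β ε) hne k l
  have hsup := ker_sub_algebraMap_pow_mul (jacobiLin α β ε) hne k l
  simp only [map_neg, map_one, sub_neg_eq_add] at hdisj hsup
  refine ⟨hdisj.eq_bot, hsup, ?_⟩
  rw [hsup, ker_jacobiLin_sub_one_pow hgood hk hα, ker_jacobiLin_add_one_pow hgood hl hβ,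
    ← Submodule.span_union]
  congr 1
  ext g
  simp
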